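/- arXiv:2602.06944 — 2 statements merged into one kernel-verified Lean document; each statement's English description precedes it below -/
import Mathlib

section
/- Let K : m×n and let P be a symmetric real n×n matrix satisfying the policy-evaluation equation for K, and set K⁺ = −R⁻¹ Bᵀ A⁻ᵀ P. Let u : ℝ → ℝᵐ be continuous and x : ℝ → ℝⁿ be continuously differentiable with x'(t) = A x(t) + B u(t) for all t. Then for all t and all T > 0: x(t)ᵀ P x(t) − x(t+T)ᵀ P x(t+T) = ∫ₜ^{t+T} x'(τ)ᵀ (Q + Kᵀ R K) x'(τ) dτ − 2 ∫ₜ^{t+T} ( u(τ) + K x'(τ) )ᵀ R K⁺ x'(τ) dτ. -/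
open Matrix MeasureTheory Filter Topology

/-- A real square matrix is Hurwitz if every complex eigenvalue has strictly
negative real part. -/
def IsHurwitz {n : ℕ} (M : Matrix (Fin n) (Fin n) ℝ) : Prop :=
  ∀ μ ∈ spectrum ℂ (M.map (Complex.ofReal)), μ.re < 0

/-- A derivative-feedback gain `K` is stabilizing if `I + B * K` is invertible
and `(I + B * K)⁻¹ * A` is Hurwitz. -/
def IsStabilizing {n m : ℕ} (A : Matrix (Fin n) (Fin n) ℝ) (B : Matrix (Fin n) (Fin m) ℝ)
    (K : Matrix (Fin m) (Fin n) ℝ) : Prop :=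
  IsUnit (1 + B * K) ∧ IsHurwitz ((1 + B * K)⁻¹ * A)

/-- The policy-evaluation (Lyapunov) equation for the gain `K`:
`P (A⁻¹(I + BK)) + (A⁻¹(I + BK))ᵀ P + Q + Kᵀ R K = 0`. -/
def PolicyEval {n m : ℕ} (A : Matrix (Fin n) (Fin n) ℝ) (B : Matrix (Fin n) (Fin m) ℝ)
    (Q : Matrix (Fin n) (Fin n) ℝ) (R : Matrix (Fin m) (Fin m) ℝ)
    (K : Matrix (Fin m) (Fin n) ℝ) (P : Matrix (Fin n) (Fin n) ℝ) : Prop :=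
  P * (A⁻¹ * (1 + B * K)) + (A⁻¹ * (1 + B * K))ᵀ * P + Q + Kᵀ * R * K = 0

/-- The policy-improvement update: `K⁺ = −R⁻¹ Bᵀ A⁻ᵀ P`. -/
noncomputable def ImprovedGain {n m : ℕ} (A : Matrix (Fin n) (Fin n) ℝ) (B : Matrix (Fin n) (Fin m) ℝ)
    (R : Matrix (Fin m) (Fin m) ℝ) (P : Matrix (Fin n) (Fin n) ℝ) :
    Matrix (Fin m) (Fin n) ℝ :=
  -(R⁻¹ * Bᵀ * (A⁻¹)ᵀ * P)

/-- The derivative-feedback algebraic Riccati equation: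
`P A⁻¹ + A⁻ᵀ P − P A⁻¹ B R⁻¹ Bᵀ A⁻ᵀ P + Q = 0`. -/
def SolvesARE {n m : ℕ} (A : Matrix (Fin n) (Fin n) ℝ) (B : Matrix (Fin n) (Fin m) ℝ)
    (Q : Matrix (Fin n) (Fin n) ℝ) (R : Matrix (Fin m) (Fin m) ℝ)
    (P : Matrix (Fin n) (Fin n) ℝ) : Prop :=
  P * A⁻¹ + (A⁻¹)ᵀ * P - P * A⁻¹ * B * R⁻¹ * Bᵀ * (A⁻¹)ᵀ * P + Q = 0

/-!
Along a trajectory `A⁻¹(I + BK)x' = x + A⁻¹B(u + Kx')`, so the policy-evaluation equation turns the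
cost `x'ᵀ(Q + KᵀRK)x'` into `-2x'ᵀPx - 2x'ᵀPA⁻¹B(u + Kx')`. Since `RK⁺ = -(A⁻¹B)ᵀP`, subtracting
`2(u + Kx')ᵀRK⁺x'` cancels the last term and leaves `-2x'ᵀPx = -(xᵀPx)'`.
-/

section MatrixForms

variable {ι κ α : Type*} [Fintype κ]

theorem continuousOn_mulVec {X : Type*} [TopologicalSpace X]
    [NonUnitalNonAssocSemiring α] [TopologicalSpace α] [ContinuousAdd α] [ContinuousMul α]
    (M : Matrix ι κ α) {g : X → κ → α} {s : Set X} (hg : ContinuousOn g s) :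
    ContinuousOn (fun a => M *ᵥ g a) s :=
  (continuous_const.matrix_mulVec continuous_id).comp_continuousOn hg

variable [Fintype ι]

theorem continuousOn_dotProduct_mulVec {X : Type*} [TopologicalSpace X]
    [NonUnitalNonAssocSemiring α] [TopologicalSpace α] [ContinuousAdd α] [ContinuousMul α]
    (M : Matrix ι κ α) {f : X → ι → α} {g : X → κ → α} {s : Set X}
    (hf : ContinuousOn f s) (hg : ContinuousOn g s) :
    ContinuousOn (fun a => f a ⬝ᵥ M *ᵥ g a) s :=
  (continuous_fst.dotProduct continuous_snd).comp_continuousOn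
    (hf.prodMk (continuousOn_mulVec M hg))

theorem dotProduct_mulVec_comm_of_isSymm [CommSemiring α] {P : Matrix ι ι α} (hP : P.IsSymm)
    (y z : ι → α) : y ⬝ᵥ P *ᵥ z = z ⬝ᵥ P *ᵥ y := by
  simpa only [hP.eq] using dotProduct_transpose_mulVec P y z

theorem inv_mul_one_add_mul_mulVec [CommRing α] [DecidableEq ι] {A : Matrix ι ι α}
    (hA : IsUnit A) (B : Matrix ι κ α) (K : Matrix κ ι α) {v x : ι → α} {u : κ → α}
    (hv : v = A *ᵥ x + B *ᵥ u) :
    (A⁻¹ * (1 + B * K)) *ᵥ v = x + (A⁻¹ * B) *ᵥ (u + K *ᵥ v) := by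
  have hx : A⁻¹ *ᵥ v = x + (A⁻¹ * B) *ᵥ u := by
    rw [hv, mulVec_add, mulVec_mulVec, mulVec_mulVec,
      nonsing_inv_mul A ((isUnit_iff_isUnit_det A).1 hA), one_mulVec]
  calc (A⁻¹ * (1 + B * K)) *ᵥ v = A⁻¹ *ᵥ v + (A⁻¹ * B) *ᵥ K *ᵥ v := by
        rw [Matrix.mul_add, Matrix.mul_one, add_mulVec, ← Matrix.mul_assoc, mulVec_mulVec]
    _ = x + (A⁻¹ * B) *ᵥ (u + K *ᵥ v) := by rw [hx, mulVec_add, add_assoc]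

variable {𝕜 : Type*} [NontriviallyNormedField 𝕜] [CompleteSpace 𝕜]

theorem hasDerivAt_dotProduct_mulVec (M : Matrix ι κ 𝕜) {f : 𝕜 → ι → 𝕜} {g : 𝕜 → κ → 𝕜}
    {f' : ι → 𝕜} {g' : κ → 𝕜} {t : 𝕜} (hf : HasDerivAt f f' t) (hg : HasDerivAt g g' t) :
    HasDerivAt (fun s => f s ⬝ᵥ M *ᵥ g s) (f t ⬝ᵥ M *ᵥ g' + f' ⬝ᵥ M *ᵥ g t) t := by
  classical
  simpa only [LinearMap.toContinuousBilinearMap_apply, toLinearMap₂'_apply'] using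
    (toLinearMap₂' 𝕜 M).toContinuousBilinearMap.hasDerivAt_of_bilinear (fun _ => hf) fun _ => hg

theorem hasDerivAt_dotProduct_mulVec_self {P : Matrix ι ι 𝕜} (hP : P.IsSymm) {f : 𝕜 → ι → 𝕜}
    {f' : ι → 𝕜} {t : 𝕜} (hf : HasDerivAt f f' t) :
    HasDerivAt (fun s => f s ⬝ᵥ P *ᵥ f s) (2 * (f' ⬝ᵥ P *ᵥ f t)) t := by
  simpa only [dotProduct_mulVec_comm_of_isSymm hP (f t) f', ← two_mul] using
    hasDerivAt_dotProduct_mulVec P hf hf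

end MatrixForms

section PolicyIteration

variable {n m : ℕ} {A P Q : Matrix (Fin n) (Fin n) ℝ} {B : Matrix (Fin n) (Fin m) ℝ}
  {R : Matrix (Fin m) (Fin m) ℝ} {K : Matrix (Fin m) (Fin n) ℝ}

theorem PolicyEval.dotProduct_mulVec_self (hPE : PolicyEval A B Q R K P) (hP : P.IsSymm)
    (v : Fin n → ℝ) :
    v ⬝ᵥ (Q + Kᵀ * R * K) *ᵥ v = -(2 * (v ⬝ᵥ P *ᵥ (A⁻¹ * (1 + B * K)) *ᵥ v)) := by
  set M := A⁻¹ * (1 + B * K)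
  have hcost : Q + Kᵀ * R * K = -(P * M + (P * M)ᵀ) := by
    rw [transpose_mul, hP.eq, eq_neg_iff_add_eq_zero, add_comm, ← add_assoc]
    exact hPE
  rw [hcost, neg_mulVec, dotProduct_neg, add_mulVec, dotProduct_add, dotProduct_transpose_mulVec,
    ← two_mul, mulVec_mulVec]

theorem mul_improvedGain (hR : IsUnit R) :
    R * ImprovedGain A B R P = -((A⁻¹ * B)ᵀ * P) := by
  rw [ImprovedGain, Matrix.mul_neg, Matrix.mul_assoc, Matrix.mul_assoc,
    mul_nonsing_inv_cancel_left R _ ((isUnit_iff_isUnit_det R).1 hR), transpose_mul,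
    Matrix.mul_assoc]

theorem dotProduct_mul_improvedGain_mulVec (hR : IsUnit R) (hP : P.IsSymm) (w : Fin m → ℝ)
    (v : Fin n → ℝ) :
    w ⬝ᵥ (R * ImprovedGain A B R P) *ᵥ v = -(v ⬝ᵥ P *ᵥ (A⁻¹ * B) *ᵥ w) := by
  rw [mul_improvedGain hR, neg_mulVec, dotProduct_neg, ← mulVec_mulVec,
    dotProduct_transpose_mulVec, dotProduct_comm, dotProduct_mulVec_comm_of_isSymm hP]

theorem PolicyEval.stageCost_sub_crossTerm (hPE : PolicyEval A B Q R K P) (hA : IsUnit A)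
    (hR : IsUnit R) (hP : P.IsSymm) {v x : Fin n → ℝ} {u : Fin m → ℝ}
    (hv : v = A *ᵥ x + B *ᵥ u) :
    v ⬝ᵥ (Q + Kᵀ * R * K) *ᵥ v - 2 * ((u + K *ᵥ v) ⬝ᵥ (R * ImprovedGain A B R P) *ᵥ v) =
      -(2 * (v ⬝ᵥ P *ᵥ x)) := by
  rw [hPE.dotProduct_mulVec_self hP, dotProduct_mul_improvedGain_mulVec hR hP,
    inv_mul_one_add_mul_mulVec hA B K hv, mulVec_add, dotProduct_add]
  ring

end PolicyIteration

theorem off_policy_integral_identity_general {n m : ℕ}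
    (A : Matrix (Fin n) (Fin n) ℝ) (B : Matrix (Fin n) (Fin m) ℝ)
    (Q : Matrix (Fin n) (Fin n) ℝ) (R : Matrix (Fin m) (Fin m) ℝ)
    (hA : IsUnit A) (hR : IsUnit R)
    (K : Matrix (Fin m) (Fin n) ℝ) (P : Matrix (Fin n) (Fin n) ℝ)
    (hPsymm : P.IsSymm) (hPE : PolicyEval A B Q R K P)
    (u : ℝ → Fin m → ℝ) (x : ℝ → Fin n → ℝ) {a b : ℝ}
    (hu : ContinuousOn u (Set.uIcc a b))
    (hx : ∀ t ∈ Set.uIcc a b, HasDerivAt x (A *ᵥ x t + B *ᵥ u t) t) :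
    x a ⬝ᵥ P *ᵥ x a - x b ⬝ᵥ P *ᵥ x b =
      (∫ τ in a..b, deriv x τ ⬝ᵥ (Q + Kᵀ * R * K) *ᵥ deriv x τ) -
      2 * ∫ τ in a..b,
        (u τ + K *ᵥ deriv x τ) ⬝ᵥ (R * ImprovedGain A B R P) *ᵥ deriv x τ := by
  have hx' : ContinuousOn (deriv x) (Set.uIcc a b) := by
    have hxc : ContinuousOn x (Set.uIcc a b) := HasDerivAt.continuousOn hx
    exact ((continuousOn_mulVec A hxc).add (continuousOn_mulVec B hu)).congr
      fun τ hτ => (hx τ hτ).deriv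
  have hcost : IntervalIntegrable (fun τ => deriv x τ ⬝ᵥ (Q + Kᵀ * R * K) *ᵥ deriv x τ)
      volume a b :=
    (continuousOn_dotProduct_mulVec _ hx' hx').intervalIntegrable
  have hcross : IntervalIntegrable (fun τ =>
      (u τ + K *ᵥ deriv x τ) ⬝ᵥ (R * ImprovedGain A B R P) *ᵥ deriv x τ) volume a b :=
    (continuousOn_dotProduct_mulVec _ (hu.add (continuousOn_mulVec K hx')) hx').intervalIntegrable
  have hderiv : ∀ τ ∈ Set.uIcc a b, HasDerivAt (fun s => -(x s ⬝ᵥ P *ᵥ x s))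
      (deriv x τ ⬝ᵥ (Q + Kᵀ * R * K) *ᵥ deriv x τ -
        2 * ((u τ + K *ᵥ deriv x τ) ⬝ᵥ (R * ImprovedGain A B R P) *ᵥ deriv x τ)) τ := by
    intro τ hτ
    rw [hPE.stageCost_sub_crossTerm hA hR hPsymm (hx τ hτ).deriv]
    exact (hasDerivAt_dotProduct_mulVec_self hPsymm (hx τ hτ).differentiableAt.hasDerivAt).neg
  rw [← intervalIntegral.integral_const_mul,
    ← intervalIntegral.integral_sub hcost (hcross.const_mul 2),
    intervalIntegral.integral_eq_sub_of_hasDerivAt hderiv (hcost.sub (hcross.const_mul 2))]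
  ring

/-- Off-policy integral identity underlying model-free policy iteration:
if the symmetric matrix `P` solves the policy-evaluation equation for `K` and
`K⁺ = −R⁻¹ Bᵀ A⁻ᵀ P`, then along any trajectory of `x' = A x + B u` (with `u`
continuous and `x` continuously differentiable) and for all `t` and `T > 0`,
`x(t)ᵀPx(t) − x(t+T)ᵀPx(t+T) = ∫ₜ^{t+T} x'ᵀ(Q + KᵀRK)x' dτ
  − 2∫ₜ^{t+T} (u + Kx')ᵀ R K⁺ x' dτ`. -/
theorem off_policy_integral_identity {n m : ℕ} (hn : 0 < n) (hm : 0 < m)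
    (A : Matrix (Fin n) (Fin n) ℝ) (B : Matrix (Fin n) (Fin m) ℝ)
    (Q : Matrix (Fin n) (Fin n) ℝ) (R : Matrix (Fin m) (Fin m) ℝ)
    (hA : IsUnit A) (hQ : Q.PosSemidef) (hR : R.PosDef)
    (K : Matrix (Fin m) (Fin n) ℝ) (P : Matrix (Fin n) (Fin n) ℝ)
    (hPsymm : P.IsSymm) (hPE : PolicyEval A B Q R K P)
    (u : ℝ → Fin m → ℝ) (x : ℝ → Fin n → ℝ)
    (hu : Continuous u)
    (hx : ∀ t : ℝ, HasDerivAt x (A.mulVec (x t) + B.mulVec (u t)) t)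
    (t T : ℝ) (hT : 0 < T) :
    x t ⬝ᵥ P.mulVec (x t) - x (t + T) ⬝ᵥ P.mulVec (x (t + T)) =
      (∫ τ in t..(t + T), deriv x τ ⬝ᵥ (Q + Kᵀ * R * K).mulVec (deriv x τ)) -
      2 * ∫ τ in t..(t + T),
        (u τ + K.mulVec (deriv x τ)) ⬝ᵥ
          (R * ImprovedGain A B R P).mulVec (deriv x τ) :=
  off_policy_integral_identity_general A B Q R hA hR.isUnit K P hPsymm hPE u x hu.continuousOn
    fun τ _ => hx τ
end

section
/- Let K : m×n and let P be a symmetric real n×n matrix satisfying the policy-evaluation equation for K. If the policy-improvement update leaves K fixed, i.e., K = −R⁻¹ Bᵀ A⁻ᵀ P, then P satisfies the derivative-feedback algebraic Riccati equation. In other words, every fixed point of the policy iteration recursion is a solution of the ARE. -/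
open Matrix MeasureTheory Filter Topology

/-! With `F = A⁻¹` and `G = A⁻¹ * B`, derivative feedback for `(A, B)` is ordinary linear-quadratic
control for the pair `(F, G)`. For that pair, completing the square in `K` splits the residual of
the policy-evaluation equation into the Riccati residual plus
`(P * G + Kᵀ * R) * R⁻¹ * (Gᵀ * P + R * K)`, whose last factor vanishes at the improved gain. -/

section LinearQuadratic

variable {ι κ α : Type*} [Fintype ι] [Fintype κ] [CommRing α]

/-- The left-hand side of the policy-evaluation (Lyapunov) equation of the gain `K`, for the pair
`(F, G)` with closed-loop matrix `F + G * K`. -/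
def lyapunovResidual (F : Matrix ι ι α) (G : Matrix ι κ α) (Q : Matrix ι ι α)
    (R : Matrix κ κ α) (K : Matrix κ ι α) (P : Matrix ι ι α) : Matrix ι ι α :=
  P * (F + G * K) + (F + G * K)ᵀ * P + Q + Kᵀ * R * K

variable [DecidableEq κ]

/-- The left-hand side of the continuous-time algebraic Riccati equation of the pair `(F, G)`;
meaningful for invertible `R`. -/
noncomputable def riccatiResidual (F : Matrix ι ι α) (G : Matrix ι κ α) (Q : Matrix ι ι α)
    (R : Matrix κ κ α) (P : Matrix ι ι α) : Matrix ι ι α :=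
  P * F + Fᵀ * P - P * G * R⁻¹ * Gᵀ * P + Q

/-- The linear-quadratic policy-improvement gain for the input matrix `G`; meaningful for
invertible `R`. -/
noncomputable def lqrGain (G : Matrix ι κ α) (R : Matrix κ κ α) (P : Matrix ι ι α) :
    Matrix κ ι α :=
  -(R⁻¹ * Gᵀ * P)

theorem mul_lqrGain {R : Matrix κ κ α} (hR : IsUnit R) (G : Matrix ι κ α) (P : Matrix ι ι α) :
    R * lqrGain G R P = -(Gᵀ * P) := by
  have hdet : IsUnit R.det := (isUnit_iff_isUnit_det R).mp hR
  rw [lqrGain, Matrix.mul_neg, Matrix.mul_assoc, mul_nonsing_inv_cancel_left R _ hdet]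

theorem lyapunovResidual_eq_riccatiResidual_add {R : Matrix κ κ α} (hR : IsUnit R)
    (F : Matrix ι ι α) (G : Matrix ι κ α) (Q : Matrix ι ι α) (K : Matrix κ ι α)
    (P : Matrix ι ι α) :
    lyapunovResidual F G Q R K P =
      riccatiResidual F G Q R P + (P * G + Kᵀ * R) * R⁻¹ * (Gᵀ * P + R * K) := by
  have hdet : IsUnit R.det := (isUnit_iff_isUnit_det R).mp hR
  have square : (P * G + Kᵀ * R) * R⁻¹ * (Gᵀ * P + R * K) =
      P * G * R⁻¹ * Gᵀ * P + P * G * K + Kᵀ * Gᵀ * P + Kᵀ * R * K := by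
    simp only [Matrix.add_mul, Matrix.mul_add, Matrix.mul_assoc,
      mul_nonsing_inv_cancel_left R _ hdet, nonsing_inv_mul_cancel_left R _ hdet]
    abel
  rw [square, lyapunovResidual, riccatiResidual, transpose_add, transpose_mul, Matrix.mul_add,
    Matrix.add_mul, ← Matrix.mul_assoc P G K]
  abel

theorem fixed_point_solves_are_general {F : Matrix ι ι α} {G : Matrix ι κ α} {Q : Matrix ι ι α}
    {R : Matrix κ κ α} (hR : IsUnit R) {K : Matrix κ ι α} {P : Matrix ι ι α}
    (hPE : lyapunovResidual F G Q R K P = 0) (hfix : K = lqrGain G R P) :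
    riccatiResidual F G Q R P = 0 := by
  have hgain : Gᵀ * P + R * K = 0 := by rw [hfix, mul_lqrGain hR, add_neg_cancel]
  rwa [lyapunovResidual_eq_riccatiResidual_add hR, hgain, Matrix.mul_zero, add_zero] at hPE

end LinearQuadratic

section DerivativeFeedback

variable {n m : ℕ} {A : Matrix (Fin n) (Fin n) ℝ} {B : Matrix (Fin n) (Fin m) ℝ}
  {Q : Matrix (Fin n) (Fin n) ℝ} {R : Matrix (Fin m) (Fin m) ℝ}
  {K : Matrix (Fin m) (Fin n) ℝ} {P : Matrix (Fin n) (Fin n) ℝ}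

theorem policyEval_iff_lyapunovResidual_eq_zero :
    PolicyEval A B Q R K P ↔ lyapunovResidual A⁻¹ (A⁻¹ * B) Q R K P = 0 := by
  rw [PolicyEval, lyapunovResidual, Matrix.mul_add, Matrix.mul_one, Matrix.mul_assoc A⁻¹ B K]

theorem improvedGain_eq_lqrGain : ImprovedGain A B R P = lqrGain (A⁻¹ * B) R P := by
  rw [ImprovedGain, lqrGain, transpose_mul, ← Matrix.mul_assoc]

theorem solvesARE_iff_riccatiResidual_eq_zero :
    SolvesARE A B Q R P ↔ riccatiResidual A⁻¹ (A⁻¹ * B) Q R P = 0 := by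
  simp only [SolvesARE, riccatiResidual, transpose_mul, Matrix.mul_assoc]

end DerivativeFeedback

/-- Fixed points of policy iteration solve the ARE: if the symmetric matrix `P`
satisfies the policy-evaluation equation for `K` and the policy-improvement
update leaves `K` fixed, i.e. `K = −R⁻¹ Bᵀ A⁻ᵀ P`, then `P` satisfies the
derivative-feedback algebraic Riccati equation. -/
theorem fixed_point_solves_are {n m : ℕ} (hn : 0 < n) (hm : 0 < m)
    (A : Matrix (Fin n) (Fin n) ℝ) (B : Matrix (Fin n) (Fin m) ℝ)
    (Q : Matrix (Fin n) (Fin n) ℝ) (R : Matrix (Fin m) (Fin m) ℝ)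
    (hA : IsUnit A) (hQ : Q.PosSemidef) (hR : R.PosDef)
    (K : Matrix (Fin m) (Fin n) ℝ) (P : Matrix (Fin n) (Fin n) ℝ)
    (hPsymm : P.IsSymm) (hPE : PolicyEval A B Q R K P)
    (hfix : K = ImprovedGain A B R P) :
    SolvesARE A B Q R P := by
  exact solvesARE_iff_riccatiResidual_eq_zero.mpr <| fixed_point_solves_are_general hR.isUnit
    (policyEval_iff_lyapunovResidual_eq_zero.mp hPE) (hfix.trans improvedGain_eq_lqrGain)
end
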